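/- Let (H_k)_{k=1}^N be Hermitian operators, with H_k acting on H_k and with largest and smallest eigenvalues λmax_k and λmin_k, and let H = Σ_{k=1}^N (extension of H_k to H). Then for every density matrix ρ on H, Var_ρ(H) ≤ (1/4)·((1/N)·Σ_{k=1}^N (λmax_k − λmin_k)²) · (N + 2N²·√((1/N)·Σ_{k=1}^N s_k)). (This is the paper's quantum Fisher information bound F_Q[ρ,H] ≤ Avg_k(F_Q^max[H_k])·(N + 2N²√(Avg_k s_k)) specialized to pure states, using that the QFI of a pure state equals four times the variance and that F_Q^max[H_k] = (λmax_k − λmin_k)².) -/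

import Mathlib

open scoped BigOperators Kronecker Matrix ComplexOrder

noncomputable section
namespace Paper

/-- A density matrix: a positive semidefinite operator of trace one. -/
def IsDensityMatrix {n : Type*} [Fintype n] (ρ : Matrix n n ℂ) : Prop :=
  ρ.PosSemidef ∧ ρ.trace = 1

/-- The operator norm `‖A‖_∞` (largest singular value) of a matrix,
as the operator norm of the induced map on Euclidean space. -/
noncomputable def opNorm {n : Type*} [Fintype n] [DecidableEq n] (A : Matrix n n ℂ) : ℝ :=
  ‖LinearMap.toContinuousLinearMap (Matrix.toEuclideanLin A)‖

/-- Von Neumann entropy `−∑ λ ln λ` over the eigenvalues; since `Real.log 0 = 0`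
in Mathlib, the convention `0 · ln 0 = 0` is automatic. -/
noncomputable def entropy {n : Type*} [Fintype n] [DecidableEq n] (σ : Matrix n n ℂ) : ℝ :=
  if h : σ.IsHermitian then -∑ i, h.eigenvalues i * Real.log (h.eigenvalues i) else 0

/-- The variance `Var_ρ(A) = Tr[ρ A† A] − |Tr[ρ A]|²`. -/
noncomputable def variance {n : Type*} [Fintype n] (ρ A : Matrix n n ℂ) : ℝ :=
  (ρ * (Aᴴ * A)).trace.re - ‖(ρ * A).trace‖ ^ 2

/-- The trace norm `‖A‖₁ = Tr √(A†A)`: the sum of the singular values. -/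
noncomputable def traceNorm {n : Type*} [Fintype n] [DecidableEq n] (A : Matrix n n ℂ) : ℝ :=
  ∑ i, Real.sqrt ((Matrix.posSemidef_conjTranspose_mul_self A).1.eigenvalues i)

/-- The pure state `|v⟩⟨v|` associated with a vector `v`. -/
def pureState {n : Type*} (v : n → ℂ) : Matrix n n ℂ :=
  Matrix.of fun x y => v x * (starRingEnd ℂ) (v y)

/-- The expectation value `⟨v|M|v⟩`. -/
noncomputable def expval {n : Type*} [Fintype n] (M : Matrix n n ℂ) (v : n → ℂ) : ℂ :=
  ∑ x, ∑ y, (starRingEnd ℂ) (v x) * M x y * v y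

variable {N : ℕ} {d : Fin N → Type*} [∀ k, Fintype (d k)] [∀ k, DecidableEq (d k)]

/-- Extension of a local operator on the `k`-th factor to the `N`-fold tensor
product `H = H_1 ⊗ ⋯ ⊗ H_N`, tensoring with the identity on every other factor.
(The tensor product is realized with index set `∀ j, d j`.) -/
def extendAt (k : Fin N) (A : Matrix (d k) (d k) ℂ) : Matrix (∀ j, d j) (∀ j, d j) ℂ :=
  Matrix.of fun x y => if ∀ j, j ≠ k → x j = y j then A (x k) (y k) else 0

/-- Reduced density matrix on the `k`-th factor: partial trace over all other factors. -/
noncomputable def reduce (k : Fin N) (ρ : Matrix (∀ j, d j) (∀ j, d j) ℂ) :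
    Matrix (d k) (d k) ℂ :=
  Matrix.of fun a b => ∑ x : ∀ j, d j, if x k = a then ρ x (Function.update x k b) else 0

section Seminorm

variable {n : Type*} [Fintype n] {ρ : Matrix n n ℂ}

/-- The seminorm `√Tr[ρ X†X]` on operators induced by a positive semidefinite `ρ`. -/
def stateNorm (ρ X : Matrix n n ℂ) : ℝ :=
  Real.sqrt (ρ * (Xᴴ * X)).trace.re

lemma stateNorm_nonneg (ρ X : Matrix n n ℂ) : 0 ≤ stateNorm ρ X := Real.sqrt_nonneg _

lemma trace_mul_conjTranspose_mul_self_nonneg (hρ : ρ.PosSemidef) (X : Matrix n n ℂ) :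
    0 ≤ (ρ * (Xᴴ * X)).trace.re := by
  have h := (RCLike.nonneg_iff.mp (hρ.mul_mul_conjTranspose_same X).trace_nonneg).1
  rwa [← Matrix.trace_mul_cycle, Matrix.mul_assoc] at h

lemma stateNorm_sq (hρ : ρ.PosSemidef) (X : Matrix n n ℂ) :
    stateNorm ρ X ^ 2 = (ρ * (Xᴴ * X)).trace.re :=
  Real.sq_sqrt (trace_mul_conjTranspose_mul_self_nonneg hρ X)

lemma toMatrixInnerProductSpace_inner (hρ : ρ.PosSemidef) (X Y : Matrix n n ℂ) :
    (ρ.toMatrixInnerProductSpace hρ).inner X Y = (ρ * (Xᴴ * Y)).trace := by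
  rw [← Matrix.mul_assoc, Matrix.trace_mul_cycle]; rfl

lemma toMatrixSeminormedAddCommGroup_norm (hρ : ρ.PosSemidef) (X : Matrix n n ℂ) :
    (ρ.toMatrixSeminormedAddCommGroup hρ).norm X = stateNorm ρ X := by
  let : SeminormedAddCommGroup (Matrix n n ℂ) := ρ.toMatrixSeminormedAddCommGroup hρ
  let : InnerProductSpace ℂ (Matrix n n ℂ) := ρ.toMatrixInnerProductSpace hρ
  rw [stateNorm, ← toMatrixInnerProductSpace_inner hρ]
  exact norm_eq_sqrt_re_inner (𝕜 := ℂ) X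

/-- The Cauchy–Schwarz inequality for the form `Tr[ρ X†Y]`. -/
lemma norm_trace_le_stateNorm_mul (hρ : ρ.PosSemidef) (X Y : Matrix n n ℂ) :
    ‖(ρ * (Xᴴ * Y)).trace‖ ≤ stateNorm ρ X * stateNorm ρ Y := by
  let : SeminormedAddCommGroup (Matrix n n ℂ) := ρ.toMatrixSeminormedAddCommGroup hρ
  let : InnerProductSpace ℂ (Matrix n n ℂ) := ρ.toMatrixInnerProductSpace hρ
  simp only [← toMatrixInnerProductSpace_inner hρ, ← toMatrixSeminormedAddCommGroup_norm hρ]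
  exact norm_inner_le_norm X Y

lemma stateNorm_sub_smul_le (hρ : ρ.PosSemidef) (X Y : Matrix n n ℂ) (c : ℂ) :
    stateNorm ρ (X - c • Y) ≤ stateNorm ρ X + ‖c‖ * stateNorm ρ Y := by
  let : SeminormedAddCommGroup (Matrix n n ℂ) := ρ.toMatrixSeminormedAddCommGroup hρ
  let : InnerProductSpace ℂ (Matrix n n ℂ) := ρ.toMatrixInnerProductSpace hρ
  simp only [← toMatrixSeminormedAddCommGroup_norm hρ]
  refine (norm_sub_le X (c • Y)).trans_eq ?_
  rw [norm_smul]

lemma trace_mul_conjTranspose (hρ : ρ.IsHermitian) (X : Matrix n n ℂ) :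
    (ρ * Xᴴ).trace = star (ρ * X).trace := by
  rw [← Matrix.trace_conjTranspose, Matrix.conjTranspose_mul, hρ.eq, Matrix.trace_mul_comm]

lemma trace_mul_eq_ofReal (hρ : ρ.IsHermitian) {X : Matrix n n ℂ} (hX : X.IsHermitian) :
    (ρ * X).trace = ((ρ * X).trace.re : ℂ) := by
  have h := trace_mul_conjTranspose hρ X
  rw [hX.eq] at h
  exact (Complex.conj_eq_iff_re.mp h.symm).symm

variable [DecidableEq n]

/-- `A†A ≤ α²`, phrased through a complementary square root so that it is visibly
preserved by star homomorphisms. -/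
def SqLe (A : Matrix n n ℂ) (α : ℝ) : Prop :=
  ∃ C : Matrix n n ℂ, Aᴴ * A + Cᴴ * C = ((α : ℂ) ^ 2) • 1

lemma SqLe.stateNorm_mul_le {A : Matrix n n ℂ} {α : ℝ} (h : SqLe A α) (hα : 0 ≤ α)
    (hρ : ρ.PosSemidef) (X : Matrix n n ℂ) :
    stateNorm ρ (A * X) ≤ α * stateNorm ρ X := by
  obtain ⟨C, hC⟩ := h
  refine abs_le_of_sq_le_sq' ?_ (mul_nonneg hα (stateNorm_nonneg _ _)) |>.2
  rw [mul_pow, stateNorm_sq hρ, stateNorm_sq hρ]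
  have hsum : ρ * ((A * X)ᴴ * (A * X)) + ρ * ((C * X)ᴴ * (C * X))
      = ((α ^ 2 : ℝ) : ℂ) • (ρ * (Xᴴ * X)) := by
    have : ρ * ((A * X)ᴴ * (A * X)) + ρ * ((C * X)ᴴ * (C * X))
        = ρ * (Xᴴ * (Aᴴ * A + Cᴴ * C) * X) := by
      simp only [Matrix.conjTranspose_mul]; noncomm_ring
    rw [this, hC]; simp
  have htr := congrArg (fun M => (Matrix.trace M).re) hsum
  simp only [Matrix.trace_add, Matrix.trace_smul, Complex.add_re, smul_eq_mul,
    Complex.re_ofReal_mul] at htr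
  linarith [trace_mul_conjTranspose_mul_self_nonneg hρ (C * X)]

lemma sqLe_of_isProjection {P : Matrix n n ℂ} (hP : P.IsHermitian) (hPP : P * P = P) :
    SqLe P 1 := by
  refine ⟨1 - P, ?_⟩
  simp only [Matrix.conjTranspose_sub, Matrix.conjTranspose_one, hP.eq, sub_mul, mul_sub, hPP]
  simp

end Seminorm

section Covariance

variable {n : Type*} [Fintype n] [DecidableEq n] {ρ : Matrix n n ℂ}

/-- The real correlation `Re Tr[ρ X Y] − Re Tr[ρ X] · Re Tr[ρ Y]`. -/
def covariance (ρ X Y : Matrix n n ℂ) : ℝ :=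
  (ρ * (X * Y)).trace.re - (ρ * X).trace.re * (ρ * Y).trace.re

lemma stateNorm_one (hρ : IsDensityMatrix ρ) : stateNorm ρ 1 = 1 := by
  simp [stateNorm, hρ.2]

/-- The operator shifted to have expectation zero. -/
def centered (ρ X : Matrix n n ℂ) : Matrix n n ℂ := X - ((ρ * X).trace.re : ℂ) • 1

lemma trace_mul_centered (hρ : IsDensityMatrix ρ) {X : Matrix n n ℂ} (hX : X.IsHermitian) :
    (ρ * centered ρ X).trace = 0 := by
  rw [centered, mul_sub, Matrix.trace_sub, trace_mul_eq_ofReal hρ.1.1 hX]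
  simp [hρ.2]

lemma isHermitian_centered {X : Matrix n n ℂ} (hX : X.IsHermitian) :
    (centered ρ X).IsHermitian := by
  rw [Matrix.IsHermitian, centered, Matrix.conjTranspose_sub, Matrix.conjTranspose_smul, hX.eq]
  simp

lemma covariance_eq_trace_mul_centered (ρ X Y : Matrix n n ℂ) :
    covariance ρ X Y = (ρ * (X * centered ρ Y)).trace.re := by
  rw [centered, mul_sub, mul_sub, Matrix.trace_sub, covariance]
  simp [mul_comm]

lemma stateNorm_centered_le (hρ : IsDensityMatrix ρ) {X : Matrix n n ℂ} (hX : X.IsHermitian)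
    {α : ℝ} (hα : 0 ≤ α) (h : SqLe X α) : stateNorm ρ (centered ρ X) ≤ α := by
  refine le_trans ?_ ((h.stateNorm_mul_le hα hρ.1 1).trans_eq (by rw [stateNorm_one hρ, mul_one]))
  rw [mul_one]
  refine abs_le_of_sq_le_sq' ?_ (stateNorm_nonneg _ _) |>.2
  rw [stateNorm_sq hρ.1, stateNorm_sq hρ.1, (isHermitian_centered hX).eq, hX.eq]
  have hc : ρ * (centered ρ X * centered ρ X)
      = ρ * (X * X) - ((ρ * X).trace.re : ℂ) • (ρ * X)
        - ((ρ * X).trace.re : ℂ) • (ρ * centered ρ X) := by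
    simp only [centered, sub_mul, mul_sub, smul_sub]; simp
  rw [hc, Matrix.trace_sub, Matrix.trace_sub, Matrix.trace_smul, Matrix.trace_smul,
    trace_mul_centered hρ hX]
  simp only [smul_eq_mul, mul_zero, sub_zero, Complex.sub_re, Complex.re_ofReal_mul]
  linarith [mul_self_nonneg (ρ * X).trace.re]

lemma abs_covariance_le (hρ : IsDensityMatrix ρ) {X Y : Matrix n n ℂ}
    (hX : X.IsHermitian) (hY : Y.IsHermitian) {α β : ℝ} (hα : 0 ≤ α) (hβ : 0 ≤ β)
    (hXα : SqLe X α) (hYβ : SqLe Y β) : |covariance ρ X Y| ≤ α * β := by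
  rw [covariance_eq_trace_mul_centered]
  calc _ ≤ ‖(ρ * (Xᴴ * centered ρ Y)).trace‖ := by
        rw [hX.eq]; exact Complex.abs_re_le_norm _
    _ ≤ stateNorm ρ X * stateNorm ρ (centered ρ Y) := norm_trace_le_stateNorm_mul hρ.1 _ _
    _ ≤ α * β := by
        refine mul_le_mul ?_ (stateNorm_centered_le hρ hY hβ hYβ) (stateNorm_nonneg _ _) hα
        simpa [stateNorm_one hρ] using hXα.stateNorm_mul_le hα hρ.1 1

/-- If a minimal projection `P` for the left factor carries most of the state, commuting
observables are weakly correlated. -/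
lemma abs_covariance_le_of_projection (hρ : IsDensityMatrix ρ) {A B P : Matrix n n ℂ}
    (hA : A.IsHermitian) (hB : B.IsHermitian) (hP : P.IsHermitian) (hPP : P * P = P)
    (hAB : A * B = B * A) (hPB : P * B = B * P) {a : ℂ} (hPAP : P * A * P = a • P)
    {α β p : ℝ} (hα : 0 ≤ α) (hβ : 0 ≤ β) (hAα : SqLe A α) (hBβ : SqLe B β)
    (hp : (ρ * P).trace = p) (hp0 : 0 < p) :
    |covariance ρ A B| ≤ 2 * (α * β) * (Real.sqrt (1 - p) + 2 * (1 - p)) := by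
  set Q := 1 - P with hQdef
  set D := centered ρ B with hDdef
  have hQ : Q.IsHermitian := by
    rw [Matrix.IsHermitian, hQdef, Matrix.conjTranspose_sub, hP.eq, Matrix.conjTranspose_one]
  have hQQ : Q * Q = Q := by
    simp only [hQdef, sub_mul, mul_sub, hPP]; simp
  have hD : D.IsHermitian := isHermitian_centered hB
  have hAD : A * D = D * A := by
    simp only [hDdef, centered, mul_sub, sub_mul, hAB]; simp
  have hPD : P * D = D * P := by
    simp only [hDdef, centered, mul_sub, sub_mul, hPB]; simp
  have hQD : Q * D = D * Q := by
    simp only [hQdef, mul_sub, sub_mul, hPD]; simp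
  have hnQ : stateNorm ρ Q = Real.sqrt (1 - p) := by
    rw [stateNorm, hQ.eq, hQQ, hQdef, mul_sub, Matrix.trace_sub, hp]
    simp [hρ.2]
  have hε : 0 ≤ 1 - p := by
    have h := trace_mul_conjTranspose_mul_self_nonneg hρ.1 Q
    rw [hQ.eq, hQQ, hQdef, mul_sub, Matrix.trace_sub, hp] at h
    simpa [hρ.2] using h
  have hεε : Real.sqrt (1 - p) * Real.sqrt (1 - p) = 1 - p := Real.mul_self_sqrt hε
  have hnD : stateNorm ρ D ≤ β := stateNorm_centered_le hρ hB hβ hBβ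
  have hnAQ : stateNorm ρ (A * Q) ≤ α * Real.sqrt (1 - p) :=
    hnQ ▸ hAα.stateNorm_mul_le hα hρ.1 Q
  have hnPAQ : stateNorm ρ (P * (A * Q)) ≤ α * Real.sqrt (1 - p) :=
    ((sqLe_of_isProjection hP hPP).stateNorm_mul_le zero_le_one hρ.1 _).trans (by simpa using hnAQ)
  have hb : |(ρ * B).trace.re| ≤ β := by
    calc _ ≤ ‖(ρ * (1ᴴ * B)).trace‖ := by simpa using Complex.abs_re_le_norm _
      _ ≤ stateNorm ρ 1 * stateNorm ρ (B * 1) := by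
        simpa using norm_trace_le_stateNorm_mul hρ.1 1 B
      _ ≤ β := by
        have := hBβ.stateNorm_mul_le hβ hρ.1 1
        rw [stateNorm_one hρ] at this ⊢
        linarith
  have hnDQ : stateNorm ρ (D * Q) ≤ 2 * β * Real.sqrt (1 - p) := by
    have h1 : D * Q = B * Q - ((ρ * B).trace.re : ℂ) • Q := by
      simp [hDdef, centered, sub_mul]
    rw [h1]
    refine (stateNorm_sub_smul_le hρ.1 _ _ _).trans ?_
    have h2 := hBβ.stateNorm_mul_le hβ hρ.1 Q
    have h3 : ‖((ρ * B).trace.re : ℂ)‖ * stateNorm ρ Q ≤ β * stateNorm ρ Q :=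
      mul_le_mul_of_nonneg_right (by simpa using hb) (stateNorm_nonneg _ _)
    rw [hnQ] at h2 h3
    rw [hnQ]
    linarith
  have ha : ‖a‖ ≤ α := by
    have hnP : stateNorm ρ P = Real.sqrt p := by
      rw [stateNorm, hP.eq, hPP, hp, Complex.ofReal_re]
    have h1 : stateNorm ρ (P * (A * P)) ≤ α * Real.sqrt p := by
      refine ((sqLe_of_isProjection hP hPP).stateNorm_mul_le zero_le_one hρ.1 _).trans ?_
      rw [one_mul, ← hnP]
      exact hAα.stateNorm_mul_le hα hρ.1 P
    have h2 : stateNorm ρ (P * (A * P)) = ‖a‖ * Real.sqrt p := by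
      rw [← mul_assoc, hPAP, stateNorm, Matrix.conjTranspose_smul, hP.eq, smul_mul_smul_comm, hPP,
        mul_smul_comm, Matrix.trace_smul, hp, smul_eq_mul, Complex.re_mul_ofReal]
      have : (star a * a).re = ‖a‖ ^ 2 := by
        rw [Complex.star_def, Complex.conj_mul', ← Complex.ofReal_pow, Complex.ofReal_re]
      rw [this, Real.sqrt_mul (sq_nonneg _), Real.sqrt_sq (norm_nonneg _)]
    rw [h2] at h1
    exact le_of_mul_le_mul_right h1 (Real.sqrt_pos.mpr hp0)
  have hsplit : A * D = (P * (A * Q)) * D + (P * (A * Q))ᴴ * D + (A * Q)ᴴ * (D * Q)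
      - a • (Qᴴ * (D * Q)) + a • D := by
    have e1 : (P * (A * Q))ᴴ = Q * A * P := by
      simp only [Matrix.conjTranspose_mul, hP.eq, hA.eq, hQ.eq]
    have e2 : (A * Q)ᴴ * (D * Q) = Q * A * Q * D := by
      simp only [Matrix.conjTranspose_mul, hA.eq, hQ.eq, ← hQD, mul_assoc]
    have e3 : Qᴴ * (D * Q) = Q * D := by rw [hQ.eq, ← hQD, ← mul_assoc, hQQ]
    have e4 : a • D = P * A * P * D + a • (Q * D) := by
      rw [hPAP, hQdef, sub_mul, one_mul, smul_sub, smul_mul_assoc]; abel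
    rw [e1, e2, e3, e4, hQdef]
    noncomm_ring
  have hre : (ρ * ((P * (A * Q)) * D)).trace.re = (ρ * ((P * (A * Q))ᴴ * D)).trace.re := by
    have e1 : (P * (A * Q)) * D = ((P * (A * Q))ᴴ * D)ᴴ := by
      rw [Matrix.conjTranspose_mul, Matrix.conjTranspose_conjTranspose, hD.eq]
      simp only [mul_assoc]
      rw [hQD, ← mul_assoc A, hAD, ← mul_assoc P, ← mul_assoc P, hPD]
      simp only [mul_assoc]
    rw [e1, trace_mul_conjTranspose hρ.1.1]
    exact Complex.conj_re _
  have hT2 : |(ρ * ((P * (A * Q))ᴴ * D)).trace.re| ≤ α * Real.sqrt (1 - p) * β :=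
    (Complex.abs_re_le_norm _).trans ((norm_trace_le_stateNorm_mul hρ.1 _ _).trans
      (mul_le_mul hnPAQ hnD (stateNorm_nonneg _ _) (by positivity)))
  have hT3 : |(ρ * ((A * Q)ᴴ * (D * Q))).trace.re| ≤ 2 * α * β * (1 - p) := by
    refine (Complex.abs_re_le_norm _).trans ((norm_trace_le_stateNorm_mul hρ.1 _ _).trans
      ((mul_le_mul hnAQ hnDQ (stateNorm_nonneg _ _) (by positivity)).trans_eq ?_))
    linear_combination 2 * α * β * hεε
  have hT4 : |(a * (ρ * (Qᴴ * (D * Q))).trace).re| ≤ 2 * α * β * (1 - p) := by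
    refine (Complex.abs_re_le_norm _).trans ?_
    rw [norm_mul]
    have h1 : ‖(ρ * (Qᴴ * (D * Q))).trace‖ ≤ Real.sqrt (1 - p) * (2 * β * Real.sqrt (1 - p)) :=
      (norm_trace_le_stateNorm_mul hρ.1 _ _).trans
        (mul_le_mul hnQ.le hnDQ (stateNorm_nonneg _ _) (by positivity))
    refine (mul_le_mul ha h1 (norm_nonneg _) hα).trans_eq ?_
    linear_combination 2 * α * β * hεε
  rw [covariance_eq_trace_mul_centered, ← hDdef, hsplit]
  simp only [mul_add, mul_sub, Matrix.trace_add, Matrix.trace_sub, mul_smul_comm,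
    Matrix.trace_smul, smul_eq_mul, Complex.add_re, Complex.sub_re] at hT4 ⊢
  rw [show (ρ * D).trace = 0 from trace_mul_centered hρ hB, hre, mul_zero, Complex.zero_re]
  rw [abs_le] at hT2 hT3 hT4 ⊢
  constructor <;> linarith [hT2.1, hT2.2, hT3.1, hT3.2, hT4.1, hT4.2]

end Covariance

section Entropy

/-- The scalar comparison between an entropy lower bound at mass defect `ε` and `√ε + 2ε`. -/
lemma min_sqrt_add_le_sqrt {ε s : ℝ} (hε : 0 ≤ ε) (h₁ : ε ≤ s)
    (h₂ : ε * (1 - ε - Real.log ε) ≤ s) :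
    min (1 / 2) (Real.sqrt ε + 2 * ε) ≤ Real.sqrt s := by
  have hlog2 := Real.log_two_gt_d9
  rcases le_or_gt (1 / 4) ε with h4 | h4
  · exact (min_le_left _ _).trans (Real.le_sqrt_of_sq_le (by linarith))
  rcases le_or_gt ε (1 / 8) with h8 | h8
  · refine (min_le_right _ _).trans (Real.le_sqrt_of_sq_le (le_trans ?_ h₂))
    rcases hε.eq_or_lt with rfl | hpos
    · simp
    have hlog : Real.log ε ≤ -(3 * Real.log 2) := by
      have : Real.log (1 / 8) = -(3 * Real.log 2) := by
        rw [show (1 / 8 : ℝ) = (2 ^ 3)⁻¹ by norm_num, Real.log_inv, Real.log_pow]; norm_num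
      exact this ▸ Real.log_le_log hpos h8
    have hr : Real.sqrt ε ≤ 0.3536 := by
      rw [Real.sqrt_le_left (by norm_num)]; norm_num; linarith
    have hsq : Real.sqrt ε ^ 2 = ε := Real.sq_sqrt hε
    have : (Real.sqrt ε + 2 * ε) ^ 2 = ε * (1 + 4 * Real.sqrt ε + 4 * ε) := by
      linear_combination hsq
    rw [this]
    exact mul_le_mul_of_nonneg_left (by linarith) hε
  · refine (min_le_left _ _).trans (Real.le_sqrt_of_sq_le (le_trans ?_ h₂))
    have hlog : Real.log ε ≤ -(2 * Real.log 2) := by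
      have : Real.log (1 / 4) = -(2 * Real.log 2) := by
        rw [show (1 / 4 : ℝ) = (2 ^ 2)⁻¹ by norm_num, Real.log_inv, Real.log_pow]; norm_num
      exact this ▸ Real.log_le_log (by linarith) h4.le
    have : ε * 2.1 ≤ ε * (1 - ε - Real.log ε) :=
      mul_le_mul_of_nonneg_left (by linarith) hε
    linarith

variable {ι : Type*} [Fintype ι] {w : ι → ℝ} {i : ι}

lemma one_sub_le_shannon (hw : ∀ j, 0 ≤ w j) (hsum : ∑ j, w j = 1) (hi : ∀ j, w j ≤ w i) :
    1 - w i ≤ -∑ j, w j * Real.log (w j) := by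
  rw [← Finset.sum_neg_distrib]
  calc 1 - w i = ∑ j, w j * (1 - w i) := by rw [← Finset.sum_mul, hsum, one_mul]
    _ ≤ _ := Finset.sum_le_sum fun j _ => by
      rcases (hw j).eq_or_lt with h | h
      · simp [← h]
      · have := Real.log_le_sub_one_of_pos h
        nlinarith [hi j]

lemma mul_one_sub_log_le_shannon (hw : ∀ j, 0 ≤ w j) (hsum : ∑ j, w j = 1) (hpos : 0 < w i) :
    (1 - w i) * (1 - (1 - w i) - Real.log (1 - w i)) ≤ -∑ j, w j * Real.log (w j) := by
  classical
  have hrest : ∑ j ∈ Finset.univ.erase i, w j = 1 - w i := by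
    rw [← hsum, ← Finset.add_sum_erase _ _ (Finset.mem_univ i)]; ring
  have h₁ : w i * (1 - w i) ≤ -(w i * Real.log (w i)) := by
    nlinarith [Real.log_le_sub_one_of_pos hpos]
  have h₂ : -((1 - w i) * Real.log (1 - w i))
      ≤ -∑ j ∈ Finset.univ.erase i, w j * Real.log (w j) := by
    nth_rewrite 1 [← hrest]
    rw [Finset.sum_mul, neg_le_neg_iff]
    refine Finset.sum_le_sum fun j hj => ?_
    rcases (hw j).eq_or_lt with h | h
    · simp [← h]
    · refine mul_le_mul_of_nonneg_left (Real.log_le_log h ?_) h.le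
      rw [← hrest]
      exact Finset.single_le_sum (fun l _ => hw l) hj
  rw [← Finset.add_sum_erase _ _ (Finset.mem_univ i)]
  linarith

end Entropy

section Spectral

variable {n : Type*} [Fintype n] [DecidableEq n]

/-- A Hermitian operator centred at the midpoint of its spectral range is bounded by half
the width of that range. -/
lemma sqLe_sub_midpoint {A : Matrix n n ℂ} (hA : A.IsHermitian) {l u : ℝ}
    (hl : ∀ i, l ≤ hA.eigenvalues i) (hu : ∀ i, hA.eigenvalues i ≤ u) :
    SqLe (A - (((u + l) / 2 : ℝ) : ℂ) • 1) ((u - l) / 2) := by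
  set Φ := Unitary.conjStarAlgAut ℂ (Matrix n n ℂ) hA.eigenvectorUnitary
  have hΦ : A = Φ (Matrix.diagonal (RCLike.ofReal ∘ hA.eigenvalues)) := hA.spectral_theorem
  refine ⟨Φ (Matrix.diagonal fun i =>
    (Real.sqrt ((u - hA.eigenvalues i) * (hA.eigenvalues i - l)) : ℂ)), ?_⟩
  have h₁ : A - (((u + l) / 2 : ℝ) : ℂ) • 1
      = Φ (Matrix.diagonal fun i => ((hA.eigenvalues i - (u + l) / 2 : ℝ) : ℂ)) := by
    nth_rewrite 1 [hΦ]
    rw [← map_one Φ, ← map_smul, ← map_sub]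
    congr 1
    ext i j
    by_cases hij : i = j <;> simp [hij]
  rw [h₁]
  simp only [← Matrix.star_eq_conjTranspose, ← map_star, ← map_mul, ← map_add]
  rw [← map_one Φ, ← map_smul]
  congr 1
  simp only [Matrix.star_eq_conjTranspose, Matrix.diagonal_conjTranspose,
    Matrix.diagonal_mul_diagonal, Matrix.diagonal_add, ← Matrix.diagonal_one, ← Matrix.diagonal_smul]
  congr 1
  ext i
  have hs := Real.mul_self_sqrt
    (mul_nonneg (sub_nonneg.mpr (hu i)) (sub_nonneg.mpr (hl i)))
  simp only [Pi.star_apply, Pi.smul_apply, Complex.star_def, Complex.conj_ofReal, smul_eq_mul,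
    mul_one]
  norm_cast
  linear_combination hs

lemma sum_eigenvalues_eq_one {σ : Matrix n n ℂ} (hσ : IsDensityMatrix σ) :
    ∑ j, hσ.1.1.eigenvalues j = 1 := by
  have h := hσ.1.1.trace_eq_sum_eigenvalues
  exact Complex.ofReal_injective (by simpa using h.symm.trans hσ.2)

/-- A largest eigenvalue `p` of a density matrix comes with a minimal projection of expectation
`p`, and controls the entropy. -/
lemma exists_projection_sqrt_entropy {σ : Matrix n n ℂ} (hσ : IsDensityMatrix σ) :
    ∃ (p : ℝ) (P : Matrix n n ℂ), 0 < p ∧ P.IsHermitian ∧ P * P = P ∧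
      (∀ A : Matrix n n ℂ, ∃ a : ℂ, P * A * P = a • P) ∧ (σ * P).trace = p ∧
      min (1 / 2) (Real.sqrt (1 - p) + 2 * (1 - p)) ≤ Real.sqrt (entropy σ) := by
  have hH := hσ.1.1
  have hsum := sum_eigenvalues_eq_one hσ
  have hw : ∀ j, 0 ≤ hH.eigenvalues j := hσ.1.eigenvalues_nonneg
  have hne : Nonempty n := by
    by_contra h
    rw [not_nonempty_iff] at h
    simp at hsum
  obtain ⟨i, hi⟩ := Finite.exists_max hH.eigenvalues
  have hpos : 0 < hH.eigenvalues i := by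
    by_contra! h
    have : ∑ j, hH.eigenvalues j ≤ 0 := Finset.sum_nonpos fun j _ => (hi j).trans h
    linarith
  set Φ := Unitary.conjStarAlgAut ℂ (Matrix n n ℂ) hH.eigenvectorUnitary
  have hΦ : σ = Φ (Matrix.diagonal (RCLike.ofReal ∘ hH.eigenvalues)) := hH.spectral_theorem
  refine ⟨hH.eigenvalues i, Φ (Matrix.single i i 1), hpos, ?_, ?_, fun A => ?_, ?_, ?_⟩
  · rw [Matrix.IsHermitian, ← Matrix.star_eq_conjTranspose, ← map_star,
      Matrix.star_eq_conjTranspose, Matrix.conjTranspose_single, star_one]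
  · rw [← map_mul, Matrix.single_mul_single_same, mul_one]
  · obtain ⟨B, rfl⟩ : ∃ B, Φ B = A := ⟨Φ.symm A, by simp⟩
    refine ⟨B i i, ?_⟩
    rw [← map_mul, ← map_mul, ← map_smul]
    congr 1
    ext j k
    simp only [Matrix.single_apply, Matrix.mul_apply, ite_and, ite_mul, mul_ite, one_mul, mul_one,
      zero_mul, mul_zero, Finset.sum_ite_eq, Finset.mem_univ, if_true, Matrix.smul_apply,
      smul_eq_mul, Finset.sum_ite_irrel, Finset.sum_const_zero]
    split_ifs <;> rfl
  · nth_rewrite 1 [hΦ]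
    rw [← map_mul, Unitary.conjStarAlgAut_apply, Matrix.trace_mul_cycle,
      Unitary.coe_star_mul_self, one_mul]
    simp [Matrix.trace, Matrix.diagonal_mul, Matrix.single_apply]
  · have hle : hH.eigenvalues i ≤ 1 :=
      hsum ▸ Finset.single_le_sum (fun j _ => hw j) (Finset.mem_univ i)
    rw [entropy, dif_pos hH]
    exact min_sqrt_add_le_sqrt (by linarith) (one_sub_le_shannon hw hsum hi)
      (mul_one_sub_log_le_shannon hw hsum hpos)

lemma entropy_nonneg {σ : Matrix n n ℂ} (hσ : IsDensityMatrix σ) : 0 ≤ entropy σ := by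
  have hH := hσ.1.1
  have hsum := sum_eigenvalues_eq_one hσ
  have hw : ∀ j, 0 ≤ hH.eigenvalues j := hσ.1.eigenvalues_nonneg
  rw [entropy, dif_pos hH, neg_nonneg]
  exact Finset.sum_nonpos fun j _ => Real.mul_log_nonpos (hw j)
    (hsum ▸ Finset.single_le_sum (fun l _ => hw l) (Finset.mem_univ j))

end Spectral

section Extension

set_option linter.unusedSectionVars false

/-- Summing over the configurations that agree with `x` away from site `k`. -/
lemma sum_ite_agree_off {M : Type*} [AddCommMonoid M] (k : Fin N) (x : ∀ j, d j)
    (f : (∀ j, d j) → M) :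
    ∑ y, (if ∀ j, j ≠ k → x j = y j then f y else 0) = ∑ b, f (Function.update x k b) := by
  rw [← Finset.sum_filter]
  symm
  refine Finset.sum_bij (fun b _ => Function.update x k b) (fun b _ => ?_) (fun b _ c _ h => ?_)
    (fun y hy => ?_) (fun _ _ => rfl)
  · simp only [Finset.mem_filter, Finset.mem_univ, true_and]
    intro j hj
    rw [Function.update_of_ne hj]
  · exact Function.update_injective x k h
  · simp only [Finset.mem_filter, Finset.mem_univ, true_and] at hy
    refine ⟨y k, Finset.mem_univ _, funext fun j => ?_⟩
    by_cases hj : j = k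
    · subst hj; simp
    · rw [Function.update_of_ne hj, hy j hj]

lemma extendAt_one (k : Fin N) : extendAt k (1 : Matrix (d k) (d k) ℂ) = 1 := by
  ext x y
  simp only [extendAt, Matrix.of_apply, Matrix.one_apply]
  by_cases hxy : x = y
  · simp [hxy]
  · rw [if_neg hxy]
    split_ifs with h₁ h₂
    · refine absurd (funext fun j => ?_) hxy
      by_cases hj : j = k
      · subst hj; exact h₂
      · exact h₁ j hj
    · rfl
    · rfl

lemma extendAt_add (k : Fin N) (A B : Matrix (d k) (d k) ℂ) :
    extendAt k (A + B) = extendAt k A + extendAt k B := by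
  ext x y
  simp only [extendAt, Matrix.of_apply, Matrix.add_apply]
  split_ifs <;> simp

lemma extendAt_smul (k : Fin N) (c : ℂ) (A : Matrix (d k) (d k) ℂ) :
    extendAt k (c • A) = c • extendAt k A := by
  ext x y
  simp only [extendAt, Matrix.of_apply, Matrix.smul_apply]
  split_ifs <;> simp

lemma extendAt_conjTranspose (k : Fin N) (A : Matrix (d k) (d k) ℂ) :
    (extendAt k A)ᴴ = extendAt k Aᴴ := by
  ext x y
  simp only [extendAt, Matrix.of_apply, Matrix.conjTranspose_apply, eq_comm (a := y _)]
  split_ifs <;> simp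

lemma extendAt_mul_apply (k : Fin N) (A : Matrix (d k) (d k) ℂ)
    (M : Matrix (∀ j, d j) (∀ j, d j) ℂ) (x z : ∀ j, d j) :
    (extendAt k A * M) x z = ∑ b, A (x k) b * M (Function.update x k b) z := by
  simp only [Matrix.mul_apply, extendAt, Matrix.of_apply, ite_mul, zero_mul]
  rw [sum_ite_agree_off k x fun y => A (x k) (y k) * M y z]
  simp

lemma extendAt_mul (k : Fin N) (A B : Matrix (d k) (d k) ℂ) :
    extendAt k (A * B) = extendAt k A * extendAt k B := by
  ext x z
  rw [extendAt_mul_apply]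
  have h : ∀ b, (∀ j, j ≠ k → Function.update x k b j = z j) ↔ ∀ j, j ≠ k → x j = z j :=
    fun b => forall₂_congr fun j hj => by rw [Function.update_of_ne hj]
  simp only [extendAt, Matrix.of_apply, h, Function.update_self, Matrix.mul_apply]
  split_ifs <;> simp

lemma extendAt_mul_extendAt_apply {k l : Fin N} (hkl : k ≠ l) (A : Matrix (d k) (d k) ℂ)
    (B : Matrix (d l) (d l) ℂ) (x z : ∀ j, d j) :
    (extendAt k A * extendAt l B) x z
      = if ∀ j, j ≠ k → j ≠ l → x j = z j then A (x k) (z k) * B (x l) (z l) else 0 := by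
  rw [extendAt_mul_apply, Finset.sum_eq_single (z k)]
  · simp only [extendAt, Matrix.of_apply, Function.update_of_ne hkl.symm, mul_ite, mul_zero]
    refine if_congr ⟨fun h j hjk hjl => ?_, fun h j hjl => ?_⟩ rfl rfl
    · simpa [Function.update_of_ne hjk] using h j hjl
    · by_cases hjk : j = k
      · subst hjk; simp
      · rw [Function.update_of_ne hjk]; exact h j hjk hjl
  · intro b _ hb
    have : ¬∀ j, j ≠ l → Function.update x k b j = z j :=
      fun h => hb (by simpa using h k hkl)
    simp [extendAt, this]
  · simp

lemma extendAt_commute {k l : Fin N} (hkl : k ≠ l) (A : Matrix (d k) (d k) ℂ)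
    (B : Matrix (d l) (d l) ℂ) :
    extendAt k A * extendAt l B = extendAt l B * extendAt k A := by
  ext x z
  rw [extendAt_mul_extendAt_apply hkl, extendAt_mul_extendAt_apply hkl.symm]
  exact if_congr ⟨fun h j hl hk => h j hk hl, fun h j hk hl => h j hl hk⟩ (mul_comm _ _) rfl

/-- The defining duality of the partial trace. -/
lemma trace_mul_extendAt (k : Fin N) (ρ : Matrix (∀ j, d j) (∀ j, d j) ℂ)
    (A : Matrix (d k) (d k) ℂ) : (ρ * extendAt k A).trace = (reduce k ρ * A).trace := by
  have h₁ : (ρ * extendAt k A).trace = ∑ x, ∑ b, ρ x (Function.update x k b) * A b (x k) := by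
    simp only [Matrix.trace, Matrix.diag_apply, Matrix.mul_apply, extendAt, Matrix.of_apply,
      mul_ite, mul_zero]
    refine Finset.sum_congr rfl fun x _ => ?_
    simp only [eq_comm (b := x _)]
    rw [sum_ite_agree_off k x fun y => ρ x y * A (y k) (x k)]
    simp
  have h₂ : (reduce k ρ * A).trace = ∑ x, ∑ b, ρ x (Function.update x k b) * A b (x k) := by
    simp only [Matrix.trace, Matrix.diag_apply, Matrix.mul_apply, reduce, Matrix.of_apply,
      Finset.sum_mul, ite_mul, zero_mul]
    rw [Finset.sum_congr rfl fun a _ => Finset.sum_comm, Finset.sum_comm]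
    refine Finset.sum_congr rfl fun x _ => ?_
    rw [Finset.sum_comm]
    simp
  rw [h₁, h₂]

lemma isDensityMatrix_reduce (k : Fin N) {ρ : Matrix (∀ j, d j) (∀ j, d j) ℂ}
    (hρ : IsDensityMatrix ρ) : IsDensityMatrix (reduce k ρ) := by
  have hentry : ∀ a b, reduce k ρ a b = (ρ * extendAt k (Matrix.single b a 1)).trace := by
    intro a b
    rw [trace_mul_extendAt, Matrix.trace_mul_single]
    simp
  refine ⟨Matrix.posSemidef_iff_dotProduct_mulVec.mpr ⟨?_, fun v => ?_⟩, ?_⟩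
  · ext a b
    rw [Matrix.conjTranspose_apply, hentry, hentry, ← trace_mul_conjTranspose hρ.1.1,
      extendAt_conjTranspose, Matrix.conjTranspose_single, star_one]
  · obtain ⟨a⟩ : Nonempty (d k) := by
      by_contra h
      rw [not_nonempty_iff] at h
      have : IsEmpty (∀ j, d j) := ⟨fun x => h.elim (x k)⟩
      simpa [Matrix.trace] using hρ.2
    set W := Matrix.vecMulVec v (Pi.single a 1)
    have hW : W * Wᴴ = Matrix.vecMulVec v (star v) := by
      ext i j
      simp [W, Matrix.mul_apply, Matrix.vecMulVec_apply, Pi.single_apply]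
    have h : star v ⬝ᵥ reduce k ρ *ᵥ v = ((extendAt k W)ᴴ * ρ * extendAt k W).trace := by
      rw [Matrix.trace_mul_cycle, Matrix.trace_mul_comm, extendAt_conjTranspose, ← extendAt_mul,
        hW, trace_mul_extendAt, Matrix.mul_vecMulVec, Matrix.trace_vecMulVec, dotProduct_comm]
    rw [h]
    exact (hρ.1.conjTranspose_mul_mul_same _).trace_nonneg
  · have h := trace_mul_extendAt k ρ 1
    rw [extendAt_one, mul_one, mul_one, hρ.2] at h
    exact h.symm

lemma isHermitian_extendAt (k : Fin N) {A : Matrix (d k) (d k) ℂ} (hA : A.IsHermitian) :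
    (extendAt k A).IsHermitian := by
  rw [Matrix.IsHermitian, extendAt_conjTranspose, hA.eq]

lemma SqLe.extendAt {k : Fin N} {A : Matrix (d k) (d k) ℂ} {α : ℝ} (h : SqLe A α) :
    SqLe (extendAt k A) α := by
  obtain ⟨C, hC⟩ := h
  refine ⟨Paper.extendAt k C, ?_⟩
  rw [extendAt_conjTranspose, extendAt_conjTranspose, ← extendAt_mul, ← extendAt_mul,
    ← extendAt_add, hC, extendAt_smul, extendAt_one]

end Extension

section LocalCovariance

/-- Observables at distinct sites are correlated by at most the square root of the local
entropy at the first site. -/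
lemma abs_covariance_extendAt_le {ρ : Matrix (∀ j, d j) (∀ j, d j) ℂ} (hρ : IsDensityMatrix ρ)
    {k l : Fin N} (hkl : k ≠ l) {A : Matrix (d k) (d k) ℂ} {B : Matrix (d l) (d l) ℂ}
    (hA : A.IsHermitian) (hB : B.IsHermitian) {α β : ℝ} (hα : 0 ≤ α) (hβ : 0 ≤ β)
    (hAα : SqLe A α) (hBβ : SqLe B β) :
    |covariance ρ (extendAt k A) (extendAt l B)|
      ≤ 2 * (α * β) * Real.sqrt (entropy (reduce k ρ)) := by
  obtain ⟨p, P, hp0, hP, hPP, hPA, hp, hs⟩ :=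
    exists_projection_sqrt_entropy (isDensityMatrix_reduce k hρ)
  obtain ⟨a, ha⟩ := hPA A
  have h₁ := abs_covariance_le hρ (isHermitian_extendAt k hA) (isHermitian_extendAt l hB) hα hβ
    hAα.extendAt hBβ.extendAt
  have h₂ := abs_covariance_le_of_projection hρ (isHermitian_extendAt k hA)
    (isHermitian_extendAt l hB) (isHermitian_extendAt k hP)
    (by rw [← extendAt_mul, hPP]) (extendAt_commute hkl A B) (extendAt_commute hkl P B)
    (by rw [← extendAt_mul, ← extendAt_mul, ha, extendAt_smul]) hα hβ hAα.extendAt hBβ.extendAt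
    (by rw [trace_mul_extendAt, hp]) hp0
  refine le_trans ?_ (mul_le_mul_of_nonneg_left hs (by positivity))
  rw [mul_min_of_nonneg _ _ (by positivity)]
  exact le_min (by linarith) h₂

lemma covariance_comm_of_commute {n : Type*} [Fintype n] {ρ X Y : Matrix n n ℂ}
    (h : X * Y = Y * X) : covariance ρ X Y = covariance ρ Y X := by
  rw [covariance, covariance, h, mul_comm (ρ * X).trace.re]

lemma covariance_sub_smul_one {n : Type*} [Fintype n] [DecidableEq n] {ρ : Matrix n n ℂ}
    (hρ : IsDensityMatrix ρ) (X Y : Matrix n n ℂ) (a b : ℝ) :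
    covariance ρ (X - (a : ℂ) • 1) (Y - (b : ℂ) • 1) = covariance ρ X Y := by
  simp only [covariance, mul_sub, sub_mul, Matrix.trace_sub, Complex.sub_re, smul_mul_assoc,
    mul_smul_comm, Matrix.trace_smul, one_mul, mul_one, hρ.2, smul_eq_mul, Complex.re_ofReal_mul,
    Complex.ofReal_re]
  ring

lemma variance_sum_eq_sum_covariance {n ι : Type*} [Fintype n] [Fintype ι]
    {ρ : Matrix n n ℂ} (hρ : ρ.IsHermitian) {X : ι → Matrix n n ℂ} (hX : ∀ i, (X i).IsHermitian) :
    variance ρ (∑ i, X i) = ∑ i, ∑ j, covariance ρ (X i) (X j) := by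
  have hS : (∑ i, X i).IsHermitian := by
    rw [Matrix.IsHermitian, Matrix.conjTranspose_sum]
    exact Finset.sum_congr rfl fun i _ => hX i
  rw [variance, hS.eq, trace_mul_eq_ofReal hρ hS, Complex.norm_real, Real.norm_eq_abs, sq_abs]
  have h₁ : (ρ * ((∑ i, X i) * ∑ j, X j)).trace.re = ∑ i, ∑ j, (ρ * (X i * X j)).trace.re := by
    rw [Finset.sum_mul_sum]
    simp only [Finset.mul_sum, Matrix.trace_sum, Complex.re_sum]
  have h₂ : (ρ * ∑ i, X i).trace.re = ∑ i, (ρ * X i).trace.re := by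
    rw [Finset.mul_sum, Matrix.trace_sum, Complex.re_sum]
  rw [h₁, h₂, sq, Finset.sum_mul_sum]
  simp only [covariance, Finset.sum_sub_distrib]

end LocalCovariance

/-- QFI bound, Lemma 2a of the paper, specialized to pure states via
`F_Q ≤ 4·Var`. For Hermitian operators `H_k` on `H_k` with largest and smallest
eigenvalues `λmax_k` and `λmin_k`, and `H = Σ_k (extension of H_k to H)`, every density
matrix `ρ` on `H` satisfies
`Var_ρ(H) ≤ (1/4)·((1/N)·Σ_k (λmax_k − λmin_k)²) · (N + 2N²·√((1/N)·Σ_k s_k))`. -/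
theorem variance_hermitian_le_avg_gap_sq_mul_entropy_factor
    [∀ k, Nonempty (d k)] (hN : 1 ≤ N)
    (H : ∀ k, Matrix (d k) (d k) ℂ) (hH : ∀ k, (H k).IsHermitian)
    (lmax lmin : Fin N → ℝ)
    (hmax : ∀ k, IsGreatest (Set.range (hH k).eigenvalues) (lmax k))
    (hmin : ∀ k, IsLeast (Set.range (hH k).eigenvalues) (lmin k))
    (ρ : Matrix (∀ j, d j) (∀ j, d j) ℂ) (hρ : IsDensityMatrix ρ) :
    variance ρ (∑ k, extendAt k (H k)) ≤
      (1 / 4 : ℝ) * ((1 / (N : ℝ)) * ∑ k, (lmax k - lmin k) ^ 2) *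
        ((N : ℝ) + 2 * (N : ℝ) ^ 2 *
          Real.sqrt ((1 / (N : ℝ)) * ∑ k, entropy (reduce k ρ))) := by
  have hN0 : (0 : ℝ) < N := by exact_mod_cast hN
  set α : Fin N → ℝ := fun k => (lmax k - lmin k) / 2 with hαdef
  set A : ∀ k, Matrix (d k) (d k) ℂ :=
    fun k => H k - (((lmax k + lmin k) / 2 : ℝ) : ℂ) • 1 with hAdef
  set s : Fin N → ℝ := fun k => entropy (reduce k ρ)
  have hs : ∀ k, 0 ≤ s k := fun k => entropy_nonneg (isDensityMatrix_reduce k hρ)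
  have hl : ∀ k i, lmin k ≤ (hH k).eigenvalues i := fun k i => (hmin k).2 ⟨i, rfl⟩
  have hu : ∀ k i, (hH k).eigenvalues i ≤ lmax k := fun k i => (hmax k).2 ⟨i, rfl⟩
  have hα : ∀ k, 0 ≤ α k := fun k => by
    obtain ⟨i⟩ := ‹∀ k, Nonempty (d k)› k
    have := (hl k i).trans (hu k i)
    simp only [hαdef]; linarith
  have hAα : ∀ k, SqLe (A k) (α k) := fun k => sqLe_sub_midpoint (hH k) (hl k) (hu k)
  have hA : ∀ k, (A k).IsHermitian := fun k => by
    rw [Matrix.IsHermitian, Matrix.conjTranspose_sub, Matrix.conjTranspose_smul, (hH k).eq]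
    simp [hAdef]
  have hext : ∀ k, extendAt k (A k)
      = extendAt k (H k) - (((lmax k + lmin k) / 2 : ℝ) : ℂ) • 1 := fun k => by
    rw [hAdef, eq_sub_iff_add_eq, ← extendAt_one k, ← extendAt_smul, ← extendAt_add,
      sub_add_cancel]
  set t : Fin N → ℝ := fun k => Real.sqrt (Real.sqrt (s k))
  have ht : ∀ k, t k * t k = Real.sqrt (s k) := fun k => Real.mul_self_sqrt (Real.sqrt_nonneg _)
  have ht0 : ∀ k, 0 ≤ t k := fun k => Real.sqrt_nonneg _
  have hcov : ∀ k l, covariance ρ (extendAt k (H k)) (extendAt l (H l))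
      ≤ (if k = l then α k ^ 2 else 0) + 2 * ((α k * t k) * (α l * t l)) := by
    intro k l
    rw [← covariance_sub_smul_one hρ _ _ ((lmax k + lmin k) / 2) ((lmax l + lmin l) / 2),
      ← hext, ← hext]
    have hnn : 0 ≤ α k * α l := mul_nonneg (hα k) (hα l)
    have hrest : 0 ≤ (α k * t k) * (α l * t l) :=
      mul_nonneg (mul_nonneg (hα k) (ht0 k)) (mul_nonneg (hα l) (ht0 l))
    by_cases hkl : k = l
    · subst hkl
      have h := (le_abs_self _).trans (abs_covariance_le hρ (isHermitian_extendAt k (hA k))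
        (isHermitian_extendAt k (hA k)) (hα k) (hα k) (hAα k).extendAt (hAα k).extendAt)
      rw [if_pos rfl]
      linarith
    · have h₁ := (le_abs_self _).trans
        (abs_covariance_extendAt_le hρ hkl (hA k) (hA l) (hα k) (hα l) (hAα k) (hAα l))
      have h₂ := (le_abs_self _).trans
        (abs_covariance_extendAt_le hρ (Ne.symm hkl) (hA l) (hA k) (hα l) (hα k) (hAα l) (hAα k))
      rw [covariance_comm_of_commute (extendAt_commute (Ne.symm hkl) _ _), mul_comm (α l)] at h₂
      rw [← ht k] at h₁
      rw [← ht l] at h₂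
      rw [if_neg hkl, zero_add]
      rcases le_total (t k) (t l) with h | h
      · nlinarith [mul_le_mul_of_nonneg_left (mul_le_mul_of_nonneg_left h (ht0 k)) hnn]
      · nlinarith [mul_le_mul_of_nonneg_left (mul_le_mul_of_nonneg_right h (ht0 l)) hnn]
  have hvar : variance ρ (∑ k, extendAt k (H k))
      ≤ ∑ k, α k ^ 2 + 2 * (∑ k, α k * t k) ^ 2 := by
    rw [variance_sum_eq_sum_covariance hρ.1.1 fun k => isHermitian_extendAt k (hH k)]
    refine (Finset.sum_le_sum fun k _ => Finset.sum_le_sum fun l _ => hcov k l).trans_eq ?_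
    simp only [Finset.sum_add_distrib, Finset.sum_ite_eq, Finset.mem_univ, if_true,
      ← Finset.mul_sum, ← Finset.sum_mul, sq]
  have hcs : (∑ k, α k * t k) ^ 2 ≤ (∑ k, α k ^ 2) * ∑ k, Real.sqrt (s k) := by
    refine (Finset.sum_mul_sq_le_sq_mul_sq _ _ _).trans_eq ?_
    simp only [sq (t _), ht]
  have hjensen : ∑ k, Real.sqrt (s k) ≤ N * Real.sqrt (1 / N * ∑ k, s k) := by
    have h := sq_sum_le_card_mul_sum_sq (s := Finset.univ) (f := fun k => Real.sqrt (s k))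
    simp only [Real.sq_sqrt (hs _), Finset.card_univ, Fintype.card_fin] at h
    refine abs_le_of_sq_le_sq' ?_ (by positivity) |>.2
    rw [mul_pow, Real.sq_sqrt (mul_nonneg (by positivity) (Finset.sum_nonneg fun k _ => hs k))]
    refine h.trans_eq ?_
    field_simp
  have hgap : ∑ k, α k ^ 2 = 1 / 4 * ∑ k, (lmax k - lmin k) ^ 2 := by
    rw [Finset.mul_sum]
    exact Finset.sum_congr rfl fun k _ => by simp only [hαdef]; ring
  have hS : 0 ≤ ∑ k, α k ^ 2 := Finset.sum_nonneg fun k _ => sq_nonneg _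
  calc variance ρ (∑ k, extendAt k (H k))
      ≤ ∑ k, α k ^ 2 + 2 * ((∑ k, α k ^ 2) * (N * Real.sqrt (1 / N * ∑ k, s k))) := by
        linarith [mul_le_mul_of_nonneg_left hjensen hS]
    _ = _ := by
        rw [hgap]
        field_simp

end Paper
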